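/- The greedy algorithm for maximizing a monotone nondecreasing submodular set function f with f(∅) = 0 subject to a cardinality constraint |S| = k achieves f(S_greedy) ≥ (1 − 1/e)·f(S*), where S* is an optimal size-k set; specifically f(S_k) ≥ (1 − (1−1/k)^k)·f(S*) ≥ (1 − 1/e)·f(S*). -/

import Mathlib

/-!
Let `A` be the current greedy set, `B` the next one and `T` a competitor with at most `k` elements.
By submodularity the gain `f (A ∪ T) - f A` is at most the sum over `w ∈ T` of the single gains
`f (insert w A) - f A`, each of which is at most the greedy gain `f B - f A`. With monotonicity,
`f T - f A ≤ k • (f B - f A)`, so each greedy step multiplies the gap to `f T` by at most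
`1 - 1 / k`, and `n` steps multiply it by at most `(1 - 1 / k) ^ n ≤ exp (-(n / k))`.
-/

/-- Submodularity of a set function, in the form of diminishing returns: the marginal gain of an
element does not increase when the base set grows. -/
def IsSubmodular {V R : Type*} [DecidableEq V] [Sub R] [LE R] (f : Finset V → R) : Prop :=
  ∀ (A B : Finset V) (u : V), A ⊆ B → u ∉ B → f (insert u B) - f B ≤ f (insert u A) - f A

/-- `B` is a possible outcome of one step of the greedy algorithm for `f` from `A`: it is obtained
by adding a new element of maximal marginal gain. Ties may be broken arbitrarily, so this is a
relation rather than a function, and maximality compares the values `f (insert w A)`, which differ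
from the gains by the constant `f A`. -/
def IsGreedyStep {V R : Type*} [DecidableEq V] [LE R] (f : Finset V → R) (A B : Finset V) : Prop :=
  ∃ u ∉ A, B = insert u A ∧ ∀ w ∉ A, f (insert w A) ≤ f (insert u A)

lemma IsGreedyStep.subset {V R : Type*} [DecidableEq V] [LE R] {f : Finset V → R}
    {A B : Finset V} (h : IsGreedyStep f A B) : A ⊆ B := by
  obtain ⟨u, -, rfl, -⟩ := h
  exact Finset.subset_insert u A

lemma IsGreedyStep.insert_le {V R : Type*} [DecidableEq V] [Preorder R] {f : Finset V → R}
    {A B : Finset V} (h : IsGreedyStep f A B) (hmono : Monotone f) (w : V) :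
    f (insert w A) ≤ f B := by
  by_cases hw : w ∈ A
  · rw [Finset.insert_eq_of_mem hw]
    exact hmono h.subset
  · obtain ⟨u, -, rfl, hmax⟩ := h
    exact hmax w hw

section OrderedGroup

variable {V R : Type*} [DecidableEq V] [AddCommGroup R] [PartialOrder R] [IsOrderedAddMonoid R]
  {f : Finset V → R}

lemma IsSubmodular.union_sub_le_sum (hsub : IsSubmodular f) (A T : Finset V) :
    f (A ∪ T) - f A ≤ ∑ w ∈ T, (f (insert w A) - f A) := by
  induction T using Finset.induction_on with
  | empty => simp
  | insert a T ha ih =>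
    have hgain : f (insert a (A ∪ T)) - f (A ∪ T) ≤ f (insert a A) - f A := by
      by_cases hmem : a ∈ A ∪ T
      · have haA : a ∈ A := (Finset.mem_union.1 hmem).resolve_right ha
        simp [Finset.insert_eq_of_mem hmem, Finset.insert_eq_of_mem haA]
      · exact hsub A (A ∪ T) a Finset.subset_union_left hmem
    calc f (A ∪ insert a T) - f A
        = (f (insert a (A ∪ T)) - f (A ∪ T)) + (f (A ∪ T) - f A) := by
          rw [Finset.union_insert, sub_add_sub_cancel]
      _ ≤ (f (insert a A) - f A) + ∑ w ∈ T, (f (insert w A) - f A) := add_le_add hgain ih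
      _ = ∑ w ∈ insert a T, (f (insert w A) - f A) := by rw [Finset.sum_insert ha]

lemma IsGreedyStep.sub_le_nsmul {A B T : Finset V} {k : ℕ} (h : IsGreedyStep f A B)
    (hmono : Monotone f) (hsub : IsSubmodular f) (hT : T.card ≤ k) :
    f T - f A ≤ k • (f B - f A) :=
  calc f T - f A ≤ f (A ∪ T) - f A := sub_le_sub_right (hmono Finset.subset_union_right) _
    _ ≤ ∑ w ∈ T, (f (insert w A) - f A) := hsub.union_sub_le_sum A T
    _ ≤ T.card • (f B - f A) :=
      Finset.sum_le_card_nsmul _ _ _ fun w _ => sub_le_sub_right (h.insert_le hmono w) _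
    _ ≤ k • (f B - f A) := nsmul_le_nsmul_left (sub_nonneg.2 (hmono h.subset)) hT

end OrderedGroup

section Real

variable {V : Type*} [DecidableEq V] {f : Finset V → ℝ} {T : Finset V} {k : ℕ}

lemma IsGreedyStep.sub_le_mul_sub {A B : Finset V} (h : IsGreedyStep f A B) (hmono : Monotone f)
    (hsub : IsSubmodular f) (hk : 1 ≤ k) (hT : T.card ≤ k) :
    f T - f B ≤ (1 - 1 / (k : ℝ)) * (f T - f A) := by
  have hkpos : (0 : ℝ) < k := by exact_mod_cast hk
  have hdiv : (f T - f A) / k ≤ f B - f A := by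
    rw [div_le_iff₀' hkpos, ← nsmul_eq_mul]
    exact h.sub_le_nsmul hmono hsub hT
  rw [sub_mul, one_mul, one_div_mul_eq_div]
  linarith

lemma one_sub_one_div_cast_nonneg (k : ℕ) : 0 ≤ 1 - 1 / (k : ℝ) :=
  sub_nonneg.2 (by simpa only [one_div] using Nat.cast_inv_le_one k)

lemma sub_le_pow_mul_sub_of_isGreedyStep {S : ℕ → Finset V} {n : ℕ}
    (hstep : ∀ i < n, IsGreedyStep f (S i) (S (i + 1))) (hmono : Monotone f)
    (hsub : IsSubmodular f) (hk : 1 ≤ k) (hT : T.card ≤ k) :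
    f T - f (S n) ≤ (1 - 1 / (k : ℝ)) ^ n * (f T - f (S 0)) :=
  le_geom (u := fun i => f T - f (S i)) (one_sub_one_div_cast_nonneg k) n
    fun i hi => (hstep i hi).sub_le_mul_sub hmono hsub hk hT

lemma one_sub_one_div_pow_le_exp (k n : ℕ) :
    (1 - 1 / (k : ℝ)) ^ n ≤ Real.exp (-(n / k)) :=
  calc (1 - 1 / (k : ℝ)) ^ n ≤ Real.exp (-(1 / k)) ^ n :=
        pow_le_pow_left₀ (one_sub_one_div_cast_nonneg k) (Real.one_sub_le_exp_neg _) n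
    _ = Real.exp (-(n / k)) := by rw [← Real.exp_nat_mul, mul_neg, mul_one_div]

theorem stmt10_general (hmono : Monotone f) (hsub : IsSubmodular f) (hk : 1 ≤ k) (n : ℕ)
    (S : ℕ → Finset V) (h0 : S 0 = ∅) (hstep : ∀ i < n, IsGreedyStep f (S i) (S (i + 1)))
    (hT : T.card ≤ k) :
    (1 - (1 - 1 / (k : ℝ)) ^ n) * (f T - f ∅) ≤ f (S n) - f ∅
      ∧ (1 - Real.exp (-(n / k))) * (f T - f ∅) ≤ (1 - (1 - 1 / (k : ℝ)) ^ n) * (f T - f ∅) := by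
  constructor
  · have hgap := sub_le_pow_mul_sub_of_isGreedyStep hstep hmono hsub hk hT
    rw [h0] at hgap
    linarith
  · have hgain : 0 ≤ f T - f ∅ := sub_nonneg.2 (hmono T.empty_subset)
    gcongr
    exact one_sub_one_div_pow_le_exp k n

end Real

/-- Greedy maximization of a monotone nondecreasing submodular function `f` with `f(∅)=0`
under a cardinality constraint: `f(S_k) ≥ (1 − (1−1/k)^k)·f(S*) ≥ (1 − 1/e)·f(S*)`. -/
theorem stmt10 {V : Type*} [DecidableEq V] [Fintype V] (f : Finset V → ℝ)
    (hnonneg : ∀ A, 0 ≤ f A)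
    (hmono : ∀ A B : Finset V, A ⊆ B → f A ≤ f B)
    (hsub : ∀ (A B : Finset V) (u : V), A ⊆ B → u ∉ B →
      f (insert u B) - f B ≤ f (insert u A) - f A)
    (hempty : f ∅ = 0)
    (k : ℕ) (hk : 1 ≤ k) (hkn : k ≤ Fintype.card V)
    (Sg : ℕ → Finset V) (h0 : Sg 0 = ∅)
    (hstep : ∀ i < k, ∃ u ∉ Sg i, Sg (i + 1) = insert u (Sg i) ∧
      ∀ w, w ∉ Sg i → f (insert w (Sg i)) ≤ f (insert u (Sg i)))
    (Sstar : Finset V) (hcard : Sstar.card = k) :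
    (1 - (1 - 1 / (k : ℝ)) ^ k) * f Sstar ≤ f (Sg k)
      ∧ (1 - 1 / Real.exp 1) * f Sstar ≤ (1 - (1 - 1 / (k : ℝ)) ^ k) * f Sstar := by
  have hk0 : (k : ℝ) ≠ 0 := Nat.cast_ne_zero.2 (Nat.one_le_iff_ne_zero.1 hk)
  simpa [hempty, hk0, Real.exp_neg] using
    stmt10_general hmono hsub hk k Sg h0 hstep hcard.le
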